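/- Let w be a partial permutation and C a channel of w that is not the northeast channel of its river. Then there exists a stream contained in the partial permutation pr_C(w) of density strictly greater than the density of C. Consequently pr_C(w) does not lie in the same two-sided cell as w. -/

import Mathlib

/-!
A channel numbering `d` strictly increases along paths, so balls of `W` with equal numbers lie
northeast or southwest of one another, and `C` has exactly one ball `c m` of each number `m`; the
same holds for `C'`. A maximal path to `c' i` from `C`, followed by `C'` itself and then by a
maximal path from `C'` back to `C`, raises the number by one at each step, since both numberings
agree on the two channels. Taking for `i` a number at which the channels differ, the part of this
path near `c' i` that stays strictly northeast of `C` is a detour `x a, …, x z` around `C`. If the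
detour is longer than a period, its southwest meet with a translate of itself is a shorter one, so
`z < a + r` can be assumed. In the partial rotation every ball `c m` becomes
`((c m).1, (c (m + 1)).2)`, which leaves room for one extra ball per period: the rotated balls
numbered `z, …, a + r - 1` together with `x a, …, x z` generate a stream of density `r + 1`.
-/

/-- A stream (for period `n`). -/
def IsStream (n : ℕ) (S : Set (ℤ × ℤ)) : Prop :=
  (∀ b : ℤ × ℤ, b ∈ S ↔ (b.1 + n, b.2 + n) ∈ S) ∧
  (∀ b b' : ℤ × ℤ, b ∈ S → b' ∈ S → b.1 < b'.1 → b.2 < b'.2) ∧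
  (∀ b b' : ℤ × ℤ, b ∈ S → b' ∈ S → b.1 = b'.1 → b = b')

/-- The density of a stream. -/
noncomputable def streamDensity (n : ℕ) (S : Set (ℤ × ℤ)) : ℕ :=
  Set.ncard {x : ℤ | 1 ≤ x ∧ x ≤ n ∧ ∃ y : ℤ, (x, y) ∈ S}

/-- The graph of a partial permutation (period `n`). -/
def IsPartialPerm (n : ℕ) (W : Set (ℤ × ℤ)) : Prop :=
  (∀ b : ℤ × ℤ, b ∈ W ↔ (b.1 + n, b.2 + n) ∈ W) ∧
  (∀ b b' : ℤ × ℤ, b ∈ W → b' ∈ W → b.1 = b'.1 → b = b') ∧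
  (∀ b b' : ℤ × ℤ, b ∈ W → b' ∈ W → b.2 = b'.2 → b = b')

/-- A channel of `W`: a stream contained in `W` of maximal density. -/
def IsChannel (n : ℕ) (W C : Set (ℤ × ℤ)) : Prop :=
  IsStream n C ∧ C ⊆ W ∧
  ∀ S : Set (ℤ × ℤ), IsStream n S → S ⊆ W → streamDensity n S ≤ streamDensity n C

/-- A path in `W` of length `k`. -/
def IsPath (W : Set (ℤ × ℤ)) (k : ℕ) (p : ℕ → ℤ × ℤ) : Prop :=
  (∀ i : ℕ, i ≤ k → p i ∈ W) ∧
  (∀ i : ℕ, i < k → (p i).1 < (p (i + 1)).1 ∧ (p i).2 < (p (i + 1)).2)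

/-- A channel numbering `d^C` of `W` relative to the channel `C`. -/
def IsChannelNumbering (n : ℕ) (W C : Set (ℤ × ℤ)) (d : ℤ × ℤ → ℤ) : Prop :=
  (∀ b b' : ℤ × ℤ, b ∈ C → b' ∈ C → b.1 < b'.1 → d b < d b') ∧
  (∀ b : ℤ × ℤ, b ∈ C → d (b.1 + n, b.2 + n) = d b + (streamDensity n C : ℤ)) ∧
  (∀ b ∈ W,
    IsGreatest
      {m : ℤ | ∃ (k : ℕ) (p : ℕ → ℤ × ℤ),
        IsPath W k p ∧ p 0 ∈ C ∧ p k = b ∧ m = d (p 0) + (k : ℤ)}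
      (d b))

/-- `C ≤_SW C'`: every ball of `C` is weakly southwest of some ball of `C'`. -/
def SWle (C C' : Set (ℤ × ℤ)) : Prop :=
  ∀ b ∈ C, ∃ b' ∈ C', b'.1 ≤ b.1 ∧ b.2 ≤ b'.2

/-- The partial rotation of `W` along the stream `C`: each ball of `C` gets the
`y`-coordinate of its successor in `C`; balls off `C` are unchanged. -/
def partialRotation (W C : Set (ℤ × ℤ)) : Set (ℤ × ℤ) :=
  (W \ C) ∪
    {p : ℤ × ℤ | ∃ b ∈ C, ∃ b' ∈ C, b.1 < b'.1 ∧
      (∀ c ∈ C, c.1 ≤ b.1 ∨ b'.1 ≤ c.1) ∧ p = (b.1, b'.2)}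

open Set

section StrictlyIncreasing

lemma eq_of_monotone_of_periodic {α β : Type*} [AddCommGroup α] [LinearOrder α]
    [IsOrderedAddMonoid α] [Archimedean α] [PartialOrder β] {f : α → β} {r : α}
    (hf : Monotone f) (hper : Function.Periodic f r) (hr : 0 < r) (u v : α) : f u = f v := by
  have hle : ∀ u v, f u ≤ f v := fun u v => by
    obtain ⟨k, hk⟩ := Archimedean.arch (u - v) hr
    calc f u ≤ f (v + k • r) := hf (sub_le_iff_le_add'.1 hk)
      _ = f v := hper.nsmul k v
  exact (hle u v).antisymm (hle v u)

lemma exists_forall_le_apply_iff {f : ℤ → ℤ} (hf : StrictMono f) (a : ℤ) :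
    ∃ u₀, ∀ u, a ≤ f u ↔ u₀ ≤ u := by
  obtain ⟨_, ⟨l, rfl⟩, hl⟩ := not_bddBelow_iff.1 hf.not_bddBelow_range_of_isPredArchimedean a
  obtain ⟨_, ⟨u, rfl⟩, hu⟩ := not_bddAbove_iff.1 hf.not_bddAbove_range_of_isSuccArchimedean a
  obtain ⟨u₀, h₀, hleast⟩ := Int.exists_least_of_bdd (P := fun u => a ≤ f u)
    ⟨l, fun v hv => (hf.lt_iff_lt.1 (hl.trans_le hv)).le⟩ ⟨u, hu.le⟩
  exact ⟨u₀, fun v => ⟨hleast v, fun hv => h₀.trans (hf.monotone hv)⟩⟩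

lemma ncard_range_inter_Icc {n R : ℕ} {f : ℤ → ℤ} (hf : StrictMono f)
    (hper : ∀ u, f (u + R) = f u + n) : (range f ∩ Icc 1 (n : ℤ)).ncard = R := by
  obtain ⟨u₀, h₀⟩ := exists_forall_le_apply_iff hf 1
  have hupper : ∀ u, f u ≤ n ↔ u < u₀ + R := fun u => by
    have := hper (u - R)
    rw [sub_add_cancel] at this
    have := h₀ (u - R)
    omega
  have himage : range f ∩ Icc 1 (n : ℤ) = f '' (Finset.Ico u₀ (u₀ + R) : Finset ℤ) := by
    ext x
    constructor
    · rintro ⟨⟨u, rfl⟩, h1, h2⟩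
      exact ⟨u, by simpa using ⟨(h₀ u).1 h1, (hupper u).1 h2⟩, rfl⟩
    · rintro ⟨u, hu, rfl⟩
      rw [Finset.coe_Ico] at hu
      exact ⟨⟨u, rfl⟩, (h₀ u).2 hu.1, (hupper u).2 hu.2⟩
  rw [himage, ncard_image_of_injective _ hf.injective, ncard_coe_finset, Int.card_Ico]
  omega

end StrictlyIncreasing

/-- `b` lies strictly northwest of `b'`. A ball `(x, y)` is drawn in matrix convention: `x` grows
southwards and `y` eastwards. -/
abbrev IsNorthwest (b b' : ℤ × ℤ) : Prop := b.1 < b'.1 ∧ b.2 < b'.2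

/-- `b` lies strictly northeast of `b'`, in the same convention as `IsNorthwest`. -/
abbrev IsNortheast (b b' : ℤ × ℤ) : Prop := b.1 < b'.1 ∧ b'.2 < b.2

lemma isNorthwest_add_right_iff (b b' v : ℤ × ℤ) :
    IsNorthwest (b + v) (b' + v) ↔ IsNorthwest b b' := by simp [IsNorthwest]

lemma isNortheast_add_right_iff (b b' v : ℤ × ℤ) :
    IsNortheast (b + v) (b' + v) ↔ IsNortheast b b' := by simp [IsNortheast]

/-- The translation vector under which streams and partial permutations are invariant. -/
abbrev period (n : ℕ) : ℤ × ℤ := (n, n)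

/-- Invariance of a set of balls under translation by `period n`, in the form used by `IsStream`
and `IsPartialPerm`. -/
def IsPeriodic (n : ℕ) (S : Set (ℤ × ℤ)) : Prop :=
  ∀ b : ℤ × ℤ, b ∈ S ↔ (b.1 + n, b.2 + n) ∈ S

lemma IsPeriodic.add_zsmul_mem_iff {n : ℕ} {S : Set (ℤ × ℤ)} (hS : IsPeriodic n S) (t : ℤ)
    (b : ℤ × ℤ) : b + t • period n ∈ S ↔ b ∈ S :=
  have hper : Function.Periodic (· ∈ S) (period n) := fun b => propext (hS b).symm
  iff_of_eq (hper.zsmul t b)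

lemma IsPartialPerm.isPeriodic {n : ℕ} {W : Set (ℤ × ℤ)} (hW : IsPartialPerm n W) :
    IsPeriodic n W := hW.1

namespace IsStream

variable {n : ℕ} {S : Set (ℤ × ℤ)} {b b' : ℤ × ℤ}

lemma isPeriodic (hS : IsStream n S) : IsPeriodic n S := hS.1

lemma isNorthwest (hS : IsStream n S) (hb : b ∈ S) (hb' : b' ∈ S) (h : b.1 < b'.1) :
    IsNorthwest b b' := ⟨h, hS.2.1 b b' hb hb' h⟩

lemma eq_of_fst_eq (hS : IsStream n S) (hb : b ∈ S) (hb' : b' ∈ S) (h : b.1 = b'.1) : b = b' :=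
  hS.2.2 b b' hb hb' h

lemma streamDensity_pos (hn : 0 < n) (hS : IsStream n S) (hb : b ∈ S) :
    0 < streamDensity n S := by
  obtain ⟨t, ht, -⟩ := existsUnique_add_zsmul_mem_Ioc (Int.natCast_pos.2 hn) b.1 0
  have hfin : {x : ℤ | 1 ≤ x ∧ x ≤ n ∧ ∃ y : ℤ, (x, y) ∈ S}.Finite :=
    (finite_Icc (1 : ℤ) n).subset fun x hx => ⟨hx.1, hx.2.1⟩
  refine (ncard_pos hfin).2 ⟨b.1 + t • (n : ℤ), by have := ht.1; omega, by simpa using ht.2,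
    b.2 + t • (n : ℤ), (hS.isPeriodic.add_zsmul_mem_iff t b).2 hb⟩

end IsStream

section PeriodicSequence

variable {n R : ℕ} {s : ℤ → ℤ × ℤ}

lemma isStream_range (hs : ∀ u, IsNorthwest (s u) (s (u + 1)))
    (hper : ∀ u, s (u + R) = s u + period n) : IsStream n (range s) := by
  have hfst : StrictMono fun u => (s u).1 := strictMono_int_of_lt_succ fun u => (hs u).1
  have hsnd : StrictMono fun u => (s u).2 := strictMono_int_of_lt_succ fun u => (hs u).2
  refine ⟨fun b => ⟨?_, ?_⟩, ?_, ?_⟩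
  · rintro ⟨u, rfl⟩
    exact ⟨u + R, hper u⟩
  · rintro ⟨u, hu⟩
    refine ⟨u - R, add_right_cancel (b := period n) ?_⟩
    rw [← hper, sub_add_cancel, hu]
    rfl
  · rintro _ _ ⟨u, rfl⟩ ⟨v, rfl⟩ h
    exact hsnd (hfst.lt_iff_lt.1 h)
  · rintro _ _ ⟨u, rfl⟩ ⟨v, rfl⟩ h
    rw [hfst.injective h]

lemma streamDensity_range (hs : StrictMono fun u => (s u).1)
    (hper : ∀ u, s (u + R) = s u + period n) : streamDensity n (range s) = R := by
  refine Eq.trans ?_ (ncard_range_inter_Icc (n := n) hs fun u => by simp [hper])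
  rw [streamDensity]
  congr 1
  ext x
  constructor
  · rintro ⟨h1, h2, y, u, hu⟩
    exact ⟨⟨u, by simp [hu]⟩, h1, h2⟩
  · rintro ⟨⟨u, rfl⟩, h1, h2⟩
    exact ⟨h1, h2, (s u).2, u, rfl⟩

end PeriodicSequence

/-- `x s, …, x k` is a path in `W`. Unlike in `IsPath`, the positions are arbitrary integers, so
that they can be matched with the values of a channel numbering. -/
structure IsChainOn (W : Set (ℤ × ℤ)) (x : ℤ → ℤ × ℤ) (s k : ℤ) : Prop where
  mem : ∀ m ∈ Icc s k, x m ∈ W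
  isNorthwest : ∀ m ∈ Ico s k, IsNorthwest (x m) (x (m + 1))

namespace IsChainOn

variable {n : ℕ} {W : Set (ℤ × ℤ)} {x y : ℤ → ℤ × ℤ} {s j k : ℤ}

lemma mono (hx : IsChainOn W x s k) {s' k' : ℤ} (hs : s ≤ s') (hk : k' ≤ k) :
    IsChainOn W x s' k' :=
  ⟨fun m hm => hx.mem m (Icc_subset_Icc hs hk hm),
    fun m hm => hx.isNorthwest m (Ico_subset_Ico hs hk hm)⟩

lemma trans (hx : IsChainOn W x s j) (hy : IsChainOn W y j k) (hxy : x j = y j) :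
    ∃ w, IsChainOn W w s k ∧ (∀ m ≤ j, w m = x m) ∧ ∀ m, j ≤ m → w m = y m := by
  set w : ℤ → ℤ × ℤ := fun m => if m ≤ j then x m else y m
  have hwx : ∀ m ≤ j, w m = x m := fun m hm => if_pos hm
  have hwy : ∀ m, j ≤ m → w m = y m := fun m hm => by
    rcases hm.eq_or_lt with rfl | hjm
    · rw [hwx _ le_rfl, hxy]
    · exact if_neg hjm.not_ge
  refine ⟨w, ⟨fun m hm => ?_, fun m hm => ?_⟩, hwx, hwy⟩
  · rcases le_total m j with hmj | hjm
    · exact hwx m hmj ▸ hx.mem m ⟨hm.1, hmj⟩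
    · exact hwy m hjm ▸ hy.mem m ⟨hjm, hm.2⟩
  · rcases lt_or_ge m j with hmj | hjm
    · rw [hwx m hmj.le, hwx (m + 1) hmj]
      exact hx.isNorthwest m ⟨hm.1, hmj⟩
    · rw [hwy m hjm, hwy (m + 1) (by omega)]
      exact hy.isNorthwest m ⟨hjm, hm.2⟩

lemma snoc (hx : IsChainOn W x s k) {b : ℤ × ℤ} (hb : b ∈ W) (hxb : IsNorthwest (x k) b) :
    IsChainOn W (Function.update x (k + 1) b) s (k + 1) := by
  refine ⟨fun m hm => ?_, fun m hm => ?_⟩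
  · rcases hm.2.eq_or_lt with rfl | hmk
    · simpa using hb
    · simpa only [Function.update_of_ne hmk.ne] using hx.mem m ⟨hm.1, Int.lt_add_one_iff.1 hmk⟩
  · rw [Function.update_of_ne hm.2.ne]
    rcases (Int.lt_add_one_iff.1 hm.2).eq_or_lt with rfl | hmk
    · simpa using hxb
    · simpa only [Function.update_of_ne (add_lt_add_left hmk 1).ne] using
        hx.isNorthwest m ⟨hm.1, hmk⟩

lemma shift (hW : IsPeriodic n W) (hx : IsChainOn W x s k) (u t : ℤ) :
    IsChainOn W (fun m => x (m - u) + t • period n) (s + u) (k + u) := by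
  refine ⟨fun m hm => (hW.add_zsmul_mem_iff t _).2 (hx.mem _ ?_), fun m hm => ?_⟩
  · exact ⟨le_sub_iff_add_le.2 hm.1, sub_le_iff_le_add.2 hm.2⟩
  · rw [add_sub_right_comm]
    exact (isNorthwest_add_right_iff ..).2
      (hx.isNorthwest (m - u) ⟨le_sub_iff_add_le.2 hm.1, sub_lt_iff_lt_add.2 hm.2⟩)

lemma exists_periodic_extension (hW : IsPeriodic n W) {R : ℕ} (hR : 0 < R)
    (hx : IsChainOn W x s (s + R)) (hper : x (s + R) = x s + period n) :
    ∃ w : ℤ → ℤ × ℤ, (∀ u, w u ∈ W) ∧ (∀ u, IsNorthwest (w u) (w (u + 1))) ∧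
      ∀ u, w (u + R) = w u + period n := by
  have hR' : (0 : ℤ) < R := Int.natCast_pos.2 hR
  set w : ℤ → ℤ × ℤ := fun u => x (s + u % R) + (u / R) • period n with hw
  have hnonneg : ∀ u : ℤ, 0 ≤ u % R := fun u => Int.emod_nonneg u hR'.ne'
  have hlt : ∀ u : ℤ, u % R < R := fun u => Int.emod_lt_of_pos u hR'
  have hper' : ∀ u, w (u + R) = w u + period n := fun u => by
    simp only [hw, Int.add_emod_right, Int.add_ediv_of_dvd_right (dvd_refl (R : ℤ)),
      Int.ediv_self hR'.ne', add_smul, one_smul, add_assoc]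
  have hwx : ∀ v ∈ Icc (0 : ℤ) R, w v = x (s + v) := fun v hv => by
    rcases hv.2.eq_or_lt with rfl | hvR
    · have h0 := hper' 0
      rw [zero_add] at h0
      rw [h0, hper]
      simp [hw]
    · simp [hw, Int.emod_eq_of_lt hv.1 hvR, Int.ediv_eq_zero_of_lt hv.1 hvR]
  have hshift : ∀ t u : ℤ, w (u + t * R) = w u + t • period n := fun t u => by
    simp only [hw, Int.add_mul_emod_self_right, Int.add_mul_ediv_right _ _ hR'.ne', add_smul,
      add_assoc]
  refine ⟨w, fun u => ?_, fun u => ?_, hper'⟩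
  · refine (hW.add_zsmul_mem_iff _ _).2 (hx.mem _ ?_)
    have := hnonneg u
    have := hlt u
    exact ⟨by omega, by omega⟩
  · have hu : u = u % R + u / R * R := (Int.emod_add_ediv_mul u R).symm
    have hmem : u % R ∈ Ico (0 : ℤ) R := ⟨hnonneg u, hlt u⟩
    rw [hu, add_right_comm, hshift, hshift, hwx _ (Ico_subset_Icc_self hmem),
      hwx _ ⟨by linarith [hmem.1], hmem.2⟩, ← add_assoc]
    exact (isNorthwest_add_right_iff ..).2
      (hx.isNorthwest (s + u % R) ⟨by linarith [hmem.1], by linarith [hmem.2]⟩)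

lemma exists_stream (hW : IsPeriodic n W) {R : ℕ} (hR : 0 < R)
    (hx : IsChainOn W x s (s + R)) (hper : x (s + R) = x s + period n) :
    ∃ S : Set (ℤ × ℤ), IsStream n S ∧ S ⊆ W ∧ streamDensity n S = R := by
  obtain ⟨w, hwW, hw, hwper⟩ := hx.exists_periodic_extension hW hR hper
  exact ⟨range w, isStream_range hw hwper, range_subset_iff.2 hwW,
    streamDensity_range (strictMono_int_of_lt_succ fun u => (hw u).1) hwper⟩

end IsChainOn

lemma IsPath.isChainOn {W : Set (ℤ × ℤ)} {k : ℕ} {p : ℕ → ℤ × ℤ} (hp : IsPath W k p) (s : ℤ) :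
    IsChainOn W (fun m => p (m - s).toNat) s (s + k) := by
  refine ⟨fun m hm => hp.1 _ ?_, fun m hm => ?_⟩
  · have := hm.2
    omega
  · obtain ⟨h1, h2⟩ := hm
    have := hp.2 (m - s).toNat (by omega)
    rwa [show (m - s).toNat + 1 = (m + 1 - s).toNat by omega] at this

namespace IsChannelNumbering

variable {n : ℕ} {W C : Set (ℤ × ℤ)} {d : ℤ × ℤ → ℤ} {b b' : ℤ × ℤ} {x : ℤ → ℤ × ℤ} {s k : ℤ}

lemma add_sub_le_of_mem (hd : IsChannelNumbering n W C d) (hx : IsChainOn W x s k)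
    (hsk : s ≤ k) (hs : x s ∈ C) : d (x s) + (k - s) ≤ d (x k) := by
  obtain ⟨l, rfl⟩ := Int.le.dest hsk
  refine (hd.2.2 _ (hx.mem _ ⟨hsk, le_rfl⟩)).2
    ⟨l, fun i => x (s + i), ⟨fun i hi => hx.mem _ ⟨by omega, by omega⟩, fun i hi => ?_⟩,
      by simpa using hs, rfl, by simp⟩
  simpa [add_assoc] using hx.isNorthwest (s + i) ⟨by omega, by omega⟩

lemma exists_isChainOn (hd : IsChannelNumbering n W C d) (hb : b ∈ W) :
    ∃ (s : ℤ) (x : ℤ → ℤ × ℤ), s ≤ d b ∧ IsChainOn W x s (d b) ∧ x s ∈ C ∧ d (x s) = s ∧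
      x (d b) = b := by
  obtain ⟨k, p, hp, h0, hk, hm⟩ := (hd.2.2 b hb).1
  refine ⟨d (p 0), fun m => p (m - d (p 0)).toNat, by omega, hm ▸ hp.isChainOn _, ?_, ?_, ?_⟩
  · simpa using h0
  · simp
  · simp [hm, hk]

lemma lt_of_isNorthwest (hd : IsChannelNumbering n W C d) (hb : b ∈ W) (hb' : b' ∈ W)
    (h : IsNorthwest b b') : d b < d b' := by
  obtain ⟨s, x, hs, hx, hxs, hds, hxb⟩ := hd.exists_isChainOn hb
  have hle := hd.add_sub_le_of_mem (hx.snoc hb' (hxb.symm ▸ h)) (by omega)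
    (by rwa [Function.update_of_ne (by omega)])
  rw [Function.update_of_ne (by omega), Function.update_self, hds] at hle
  omega

lemma add_sub_le (hd : IsChannelNumbering n W C d) (hx : IsChainOn W x s k) (hsk : s ≤ k) :
    d (x s) + (k - s) ≤ d (x k) := by
  induction k, hsk using Int.leInduction with
  | base => simp
  | succ k hsk ih =>
    have hstep := hd.lt_of_isNorthwest (hx.mem k ⟨hsk, by omega⟩)
      (hx.mem (k + 1) ⟨by omega, le_rfl⟩) (hx.isNorthwest k ⟨hsk, by omega⟩)
    have := ih (hx.mono le_rfl (by omega))
    omega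

lemma apply_eq_of_isChainOn (hd : IsChannelNumbering n W C d) (hx : IsChainOn W x s k)
    (hs : d (x s) = s) (hk : d (x k) = k) {m : ℤ} (hm : m ∈ Icc s k) : d (x m) = m := by
  have hleft := hd.add_sub_le (hx.mono le_rfl hm.2) hm.1
  have hright := hd.add_sub_le (hx.mono hm.1 le_rfl) hm.2
  omega

lemma eq_or_isNortheast (hW : IsPartialPerm n W) (hd : IsChannelNumbering n W C d) (hb : b ∈ W)
    (hb' : b' ∈ W) (h : d b = d b') : b = b' ∨ IsNortheast b b' ∨ IsNortheast b' b := by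
  have hnot : ¬ IsNorthwest b b' := fun hlt => (hd.lt_of_isNorthwest hb hb' hlt).ne h
  have hnot' : ¬ IsNorthwest b' b := fun hlt => (hd.lt_of_isNorthwest hb' hb hlt).ne' h
  by_cases hfst : b.1 = b'.1
  · exact Or.inl (hW.2.1 b b' hb hb' hfst)
  by_cases hsnd : b.2 = b'.2
  · exact Or.inl (hW.2.2 b b' hb hb' hsnd)
  · omega

lemma apply_add_zsmul_of_mem (hC : IsPeriodic n C) (hd : IsChannelNumbering n W C d)
    (hb : b ∈ C) (t : ℤ) : d (b + t • period n) = d b + t * streamDensity n C := by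
  have hstep : ∀ t : ℤ, d (b + (t + 1) • period n) =
      d (b + t • period n) + streamDensity n C := fun t => by
    rw [add_smul, one_smul, ← add_assoc]
    exact hd.2.1 _ ((hC.add_zsmul_mem_iff t b).2 hb)
  induction t using Int.induction_on with
  | zero => simp
  | succ i ih => rw [hstep, ih, add_one_mul, add_assoc]
  | pred i ih =>
    have := hstep (-i - 1)
    rw [sub_add_cancel, ih] at this
    linarith

lemma apply_add_zsmul (hW : IsPeriodic n W) (hC : IsPeriodic n C)
    (hd : IsChannelNumbering n W C d) (hb : b ∈ W) (t : ℤ) :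
    d (b + t • period n) = d b + t * streamDensity n C := by
  have hle : ∀ {b}, b ∈ W → ∀ t : ℤ,
      d b + t * streamDensity n C ≤ d (b + t • period n) := fun {b} hb t => by
    obtain ⟨s, x, hs, hx, hxs, hds, hxb⟩ := hd.exists_isChainOn hb
    have := hd.add_sub_le_of_mem (hx.shift hW 0 t) (by omega)
      ((hC.add_zsmul_mem_iff t _).2 (by simpa using hxs))
    simp only [add_zero, sub_zero, hxb, apply_add_zsmul_of_mem hC hd hxs, hds] at this
    linarith
  refine le_antisymm ?_ (hle hb t)
  have := hle ((hW.add_zsmul_mem_iff t b).2 hb) (-t)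
  rw [neg_smul, add_neg_cancel_right] at this
  linarith

lemma injOn (hC : IsStream n C) (hd : IsChannelNumbering n W C d) : InjOn d C := by
  intro b hb b' hb' h
  rcases lt_trichotomy b.1 b'.1 with hlt | heq | hlt
  · exact absurd h (hd.1 b b' hb hb' hlt).ne
  · exact hC.eq_of_fst_eq hb hb' heq
  · exact absurd h (hd.1 b' b hb' hb hlt).ne'

lemma surjOn (hC : IsStream n C) (hd : IsChannelNumbering n W C d)
    (hr : 0 < streamDensity n C) : SurjOn d C univ := by
  set r := streamDensity n C 
  have : NeZero r := ⟨hr.ne'⟩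
  set X := {x : ℤ | 1 ≤ x ∧ x ≤ n ∧ ∃ y : ℤ, (x, y) ∈ C}
  choose y hy using fun x : X => x.2.2.2
  have htranslate : ∀ {b : ℤ × ℤ}, b ∈ C → ∀ {m : ℤ}, (d b : ZMod r) = m →
      ∃ t : ℤ, d (b + t • period n) = m := fun {b} hb {m} h => by
    obtain ⟨t, ht⟩ := (ZMod.intCast_eq_intCast_iff_dvd_sub _ _ _).1 h
    exact ⟨t, by rw [apply_add_zsmul_of_mem hC.isPeriodic hd hb]; linarith⟩
  have hinj : Function.Injective fun x : X => (d (x, y x) : ZMod r) := fun x x' h => by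
    obtain ⟨t, ht⟩ := htranslate (hy x) h
    have hball := hd.injOn hC ((hC.isPeriodic.add_zsmul_mem_iff t _).2 (hy x)) (hy x') ht
    have hfst : (x : ℤ) + t * n = x' := congrArg Prod.fst hball
    have habs : |(x' : ℤ) - x| < n := abs_lt.2
      ⟨by linarith [x'.2.1, x.2.2.1], by linarith [x.2.1, x'.2.2.1]⟩
    have hdvd : (n : ℤ) ∣ x' - x := ⟨t, by linarith⟩
    exact Subtype.ext (by linarith [Int.eq_zero_of_abs_lt_dvd hdvd habs])
  have hcard : Nat.card (ZMod r) ≤ Nat.card X := by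
    rw [Nat.card_zmod, Nat.card_coe_set_eq]
    rfl
  intro m _
  obtain ⟨x, hx⟩ := (hinj.bijective_of_nat_card_le hcard).2 (m : ZMod r)
  obtain ⟨t, ht⟩ := htranslate (hy x) hx
  exact ⟨_, (hC.isPeriodic.add_zsmul_mem_iff t _).2 (hy x), ht⟩

end IsChannelNumbering

/-- `c m` is the ball of the stream `C` numbered `m` by `d`, and the numbers advance by `r` per
period. -/
structure Enumerates (n r : ℕ) (C : Set (ℤ × ℤ)) (d : ℤ × ℤ → ℤ) (c : ℤ → ℤ × ℤ) : Prop where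
  mem : ∀ m, c m ∈ C
  apply_eq : ∀ m, d (c m) = m
  eq_of_mem : ∀ b ∈ C, c (d b) = b
  isNorthwest : ∀ m l, m < l → IsNorthwest (c m) (c l)
  add_zsmul : ∀ m t : ℤ, c m + t • period n = c (m + t * r)

lemma IsChannelNumbering.exists_enumerates {n : ℕ} {W C : Set (ℤ × ℤ)} {d : ℤ × ℤ → ℤ}
    (hC : IsStream n C) (hd : IsChannelNumbering n W C d) (hr : 0 < streamDensity n C) :
    ∃ c, Enumerates n (streamDensity n C) C d c := by
  choose c hcC hc using fun m => hd.surjOn hC hr (mem_univ m)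
  refine ⟨c, hcC, hc, fun b hb => hd.injOn hC (hcC _) hb (hc _), fun m l hml => ?_, fun m t => ?_⟩
  · refine hC.isNorthwest (hcC m) (hcC l) (lt_of_not_ge fun hge => ?_)
    rcases hge.eq_or_lt with heq | hlt
    · have := congrArg d (hC.eq_of_fst_eq (hcC l) (hcC m) heq)
      rw [hc, hc] at this
      omega
    · have := hd.1 _ _ (hcC l) (hcC m) hlt
      rw [hc, hc] at this
      omega
  · refine hd.injOn hC ((hC.isPeriodic.add_zsmul_mem_iff t _).2 (hcC m)) (hcC _) ?_
    rw [hd.apply_add_zsmul_of_mem hC.isPeriodic (hcC m), hc, hc]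

namespace Enumerates

variable {n r : ℕ} {W C : Set (ℤ × ℤ)} {d : ℤ × ℤ → ℤ} {c : ℤ → ℤ × ℤ}

lemma range_eq (hc : Enumerates n r C d c) : range c = C :=
  Subset.antisymm (range_subset_iff.2 hc.mem) fun b hb => ⟨d b, hc.eq_of_mem b hb⟩

lemma isChainOn (hc : Enumerates n r C d c) (hCW : C ⊆ W) (s k : ℤ) : IsChainOn W c s k :=
  ⟨fun m _ => hCW (hc.mem m), fun m _ => hc.isNorthwest m (m + 1) (lt_add_one m)⟩

lemma eq_of_apply_eq (hc : Enumerates n r C d c) {b : ℤ × ℤ} (hb : b ∈ C) {m : ℤ}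
    (h : d b = m) : b = c m := by rw [← h, hc.eq_of_mem b hb]

end Enumerates

section TwoChannels

variable {n r : ℕ} {W C C' : Set (ℤ × ℤ)} {d d' : ℤ × ℤ → ℤ} {c c' : ℤ → ℤ × ℤ}

lemma IsChannelNumbering.apply_enumerates_eq (hW : IsPeriodic n W) (hC' : IsPeriodic n C')
    (hCW : C ⊆ W) (hd' : IsChannelNumbering n W C' d') (hr : 0 < r)
    (hdens : streamDensity n C' = r) (hc : Enumerates n r C d c) (hagree : ∃ b ∈ C, d' b = d b)
    (m : ℤ) : d' (c m) = m := by
  have hmono : Monotone fun m => d' (c m) - m := monotone_int_of_le_succ fun m => by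
    have := hd'.lt_of_isNorthwest (hCW (hc.mem m)) (hCW (hc.mem (m + 1)))
      (hc.isNorthwest m (m + 1) (lt_add_one m))
    omega
  have hper : Function.Periodic (fun m => d' (c m) - m) (r : ℤ) := fun m => by
    have hshift := hd'.apply_add_zsmul hW hC' (hCW (hc.mem m)) 1
    rw [hc.add_zsmul, one_mul, one_mul, hdens] at hshift
    simp only [hshift]
    ring
  obtain ⟨b, hb, hdb⟩ := hagree
  have hconst := eq_of_monotone_of_periodic hmono hper (Int.natCast_pos.2 hr) m (d b)
  simp only [hc.eq_of_mem b hb, hdb, sub_self] at hconst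
  omega

lemma Enumerates.isNortheast_of_SWle (hW : IsPartialPerm n W) (hCW : C ⊆ W) (hCW' : C' ⊆ W)
    (hd : IsChannelNumbering n W C d) (hc : Enumerates n r C d c) (hc' : Enumerates n r C' d' c')
    (hsw : SWle C C') {m : ℤ} (hdm : d (c' m) = m) (hm : c' m ≠ c m) :
    IsNortheast (c' m) (c m) := by
  refine ((hd.eq_or_isNortheast hW (hCW' (hc'.mem m)) (hCW (hc.mem m))
    (hdm.trans (hc.apply_eq m).symm)).resolve_left hm).resolve_right fun hsouthwest => ?_
  obtain ⟨b, hb, hfst, hsnd⟩ := hsw (c m) (hc.mem m)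
  rw [← hc'.eq_of_mem b hb] at hfst hsnd
  rcases lt_trichotomy (d' b) m with hlt | heq | hlt
  · have := hc'.isNorthwest _ _ hlt
    omega
  · rw [heq] at hfst
    omega
  · have := hc'.isNorthwest _ _ hlt
    omega

lemma exists_isChainOn_through (hW : IsPeriodic n W) (hCW : C ⊆ W) (hCW' : C' ⊆ W)
    (hd : IsChannelNumbering n W C d) (hd' : IsChannelNumbering n W C' d') (hr : 0 < r)
    (hc : Enumerates n r C d c) (hc' : Enumerates n r C' d' c') {i : ℤ}
    (hdi : d (c' i) = i) (hdi' : d' (c i) = i) :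
    ∃ (s k : ℤ) (x : ℤ → ℤ × ℤ), i ∈ Icc s k ∧ IsChainOn W x s k ∧ x s = c s ∧ x i = c' i ∧
      x k = c k := by
  obtain ⟨s, x, hsi, hx, hxs, hds, hxi⟩ := hd.exists_isChainOn (hCW' (hc'.mem i))
  obtain ⟨t, y, hti, hy, hyt, hdt, hyi⟩ := hd'.exists_isChainOn (hCW (hc.mem i))
  rw [hdi] at hsi hx hxi
  rw [hdi'] at hti hy hyi
  -- translate the path back to `C` so far that it starts beyond `c' i`
  obtain ⟨u, hu⟩ := Archimedean.arch (i - t) (Int.natCast_pos.2 hr)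
  have hit : i ≤ t + u * r := by
    rw [nsmul_eq_mul] at hu
    linarith
  have hstart : y (t + u * r - u * r) + (u : ℤ) • period n = c' (t + u * r) := by
    rw [add_sub_cancel_right, hc'.eq_of_apply_eq hyt hdt, hc'.add_zsmul]
  have hend : y (i + u * r - u * r) + (u : ℤ) • period n = c (i + u * r) := by
    rw [add_sub_cancel_right, hyi, hc.add_zsmul]
  obtain ⟨v, hv, hvx, hvc'⟩ := hx.trans (hc'.isChainOn hCW' i (t + u * r)) hxi
  obtain ⟨w, hw, hwv, hwy⟩ := hv.trans (hy.shift hW (u * r) u)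
    ((hvc' _ hit).trans hstart.symm)
  refine ⟨s, i + u * r, w, ⟨hsi, by linarith⟩, hw, ?_, ?_, ?_⟩
  · rw [hwv s (hsi.trans hit), hvx s hsi, hc.eq_of_apply_eq hxs hds]
  · rw [hwv i hit, hvx i le_rfl, hxi]
  · rw [hwy _ (by linarith), hend]

end TwoChannels

/-- The ball of the partial rotation in the row of `c m`, for `c` listing the rotated channel in
order. -/
def rotatedBall (c : ℤ → ℤ × ℤ) (m : ℤ) : ℤ × ℤ := ((c m).1, (c (m + 1)).2)

section Rotation

variable {n r : ℕ} {W C : Set (ℤ × ℤ)} {d : ℤ × ℤ → ℤ} {c : ℤ → ℤ × ℤ}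

lemma isPeriodic_partialRotation (hW : IsPeriodic n W) (hC : IsPeriodic n C) :
    IsPeriodic n (partialRotation W C) := by
  have hshift : ∀ (t : ℤ) {b : ℤ × ℤ}, b ∈ partialRotation W C →
      b + t • period n ∈ partialRotation W C := by
    rintro t b (⟨hbW, hbC⟩ | ⟨b, hb, b', hb', hlt, hgap, rfl⟩)
    · exact Or.inl ⟨(hW.add_zsmul_mem_iff t b).2 hbW,
        fun h => hbC ((hC.add_zsmul_mem_iff t b).1 h)⟩
    · refine Or.inr ⟨_, (hC.add_zsmul_mem_iff t b).2 hb,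
        _, (hC.add_zsmul_mem_iff t b').2 hb', by simpa using hlt, fun p hp => ?_, rfl⟩
      have := hgap _ ((hC.add_zsmul_mem_iff (-t) p).2 hp)
      simpa [← sub_eq_add_neg, sub_le_iff_le_add, le_sub_iff_add_le] using this
  refine fun b => ⟨fun hb => ?_, fun hb => by simpa using hshift (-1) hb⟩
  have hb' := hshift 1 hb
  rwa [one_smul] at hb'

lemma Enumerates.rotatedBall_mem (hc : Enumerates n r C d c) (m : ℤ) :
    rotatedBall c m ∈ partialRotation W C := by
  refine Or.inr ⟨c m, hc.mem m, c (m + 1), hc.mem _, (hc.isNorthwest _ _ (lt_add_one m)).1,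
    fun b hb => ?_, rfl⟩
  have hmono : StrictMono fun m => (c m).1 := fun m l h => (hc.isNorthwest m l h).1
  rw [← hc.eq_of_mem b hb]
  exact (le_or_gt (d b) m).imp (fun h => hmono.monotone h) fun h => hmono.monotone h

lemma Enumerates.rotatedBall_isNorthwest (hc : Enumerates n r C d c) {m l : ℤ} (h : m < l) :
    IsNorthwest (rotatedBall c m) (rotatedBall c l) :=
  ⟨(hc.isNorthwest m l h).1, (hc.isNorthwest (m + 1) (l + 1) (by omega)).2⟩

lemma Enumerates.rotatedBall_add_period (hc : Enumerates n r C d c) (m : ℤ) :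
    rotatedBall c (m + r) = rotatedBall c m + period n := by
  have hshift : ∀ m, c (m + r) = c m + period n := fun m => by simpa using (hc.add_zsmul m 1).symm
  simp only [rotatedBall, add_right_comm m (r : ℤ) 1, hshift]
  rfl

end Rotation

/-- The path `x a, …, x z` in `W` is a detour around the channel listed by `c`: each of its balls
is numbered by its position and strictly northeast of the channel ball of the same number, and
the path fits between the rotated balls numbered `a - 1` and `z`. -/
structure IsDetour (W : Set (ℤ × ℤ)) (d : ℤ × ℤ → ℤ) (c x : ℤ → ℤ × ℤ) (a z : ℤ) : Prop where
  le : a ≤ z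
  isChainOn : IsChainOn W x a z
  apply_eq : ∀ m ∈ Icc a z, d (x m) = m
  isNortheast : ∀ m ∈ Icc a z, IsNortheast (x m) (c m)
  first : (c (a - 1)).1 < (x a).1
  last : (x z).2 < (c (z + 1)).2

/-- The southwest meet of two balls, used to cut a detour short by one of its translates. -/
def southwestMeet (b b' : ℤ × ℤ) : ℤ × ℤ := (max b.1 b'.1, min b.2 b'.2)

lemma IsChannelNumbering.southwestMeet_eq_or {n : ℕ} {W C : Set (ℤ × ℤ)} {d : ℤ × ℤ → ℤ}
    (hW : IsPartialPerm n W) (hd : IsChannelNumbering n W C d) {b b' : ℤ × ℤ} (hb : b ∈ W)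
    (hb' : b' ∈ W) (h : d b = d b') : southwestMeet b b' = b ∨ southwestMeet b b' = b' := by
  rcases hd.eq_or_isNortheast hW hb hb' h with rfl | hne | hne
  · exact Or.inl (by simp [southwestMeet])
  · exact Or.inr (by simp [southwestMeet, hne.1.le, hne.2.le])
  · exact Or.inl (by simp [southwestMeet, hne.1.le, hne.2.le])

namespace IsDetour

variable {n r : ℕ} {W C : Set (ℤ × ℤ)} {d : ℤ × ℤ → ℤ} {c x y : ℤ → ℤ × ℤ} {a a' z z' : ℤ}

lemma meet (hW : IsPartialPerm n W) (hd : IsChannelNumbering n W C d)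
    (hx : IsDetour W d c x a z) (hy : IsDetour W d c y a' z') (haa' : a ≤ a') (ha'z : a' ≤ z)
    (hzz' : z ≤ z') : IsDetour W d c (fun m => southwestMeet (x m) (y m)) a' z := by
  have hmx : ∀ m ∈ Icc a' z, m ∈ Icc a z := fun m => (Icc_subset_Icc_left haa' ·)
  have hmy : ∀ m ∈ Icc a' z, m ∈ Icc a' z' := fun m => (Icc_subset_Icc_right hzz' ·)
  have hmem : ∀ m ∈ Icc a' z,
      southwestMeet (x m) (y m) ∈ W ∧ d (southwestMeet (x m) (y m)) = m := fun m hm => by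
    have hxW := hx.isChainOn.mem m (hmx m hm)
    have hyW := hy.isChainOn.mem m (hmy m hm)
    have hdx := hx.apply_eq m (hmx m hm)
    have hdy := hy.apply_eq m (hmy m hm)
    rcases hd.southwestMeet_eq_or hW hxW hyW (hdx.trans hdy.symm) with h | h <;> rw [h]
    exacts [⟨hxW, hdx⟩, ⟨hyW, hdy⟩]
  refine ⟨ha'z, ⟨fun m hm => (hmem m hm).1, fun m hm => ?_⟩, fun m hm => (hmem m hm).2,
    fun m hm => ?_, hy.first.trans_le (le_max_right _ _), (min_le_left _ _).trans_lt hx.last⟩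
  · have hnwx := hx.isChainOn.isNorthwest m (Ico_subset_Ico_left haa' hm)
    have hnwy := hy.isChainOn.isNorthwest m (Ico_subset_Ico_right hzz' hm)
    exact ⟨max_lt_max hnwx.1 hnwy.1, min_lt_min hnwx.2 hnwy.2⟩
  · have hnex := hx.isNortheast m (hmx m hm)
    have hney := hy.isNortheast m (hmy m hm)
    exact ⟨max_lt hnex.1 hney.1, lt_min hnex.2 hney.2⟩

lemma shift (hW : IsPeriodic n W) (hC : IsPeriodic n C) (hd : IsChannelNumbering n W C d)
    (hc : Enumerates n (streamDensity n C) C d c) (hx : IsDetour W d c x a z) (t : ℤ) :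
    IsDetour W d c (fun m => x (m - t * streamDensity n C) + t • period n)
      (a + t * streamDensity n C) (z + t * streamDensity n C) := by
  set u := t * (streamDensity n C : ℤ)
  have hcu : ∀ m, c m = c (m - u) + t • period n := fun m => by
    rw [hc.add_zsmul, sub_add_cancel]
  have hsub : ∀ m ∈ Icc (a + u) (z + u), m - u ∈ Icc a z := fun m hm =>
    ⟨le_sub_iff_add_le.2 hm.1, sub_le_iff_le_add.2 hm.2⟩
  refine ⟨by linarith [hx.le], hx.isChainOn.shift hW u t, fun m hm => ?_,
    fun m hm => ?_, ?_, ?_⟩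
  · rw [hd.apply_add_zsmul hW hC (hx.isChainOn.mem _ (hsub m hm)), hx.apply_eq _ (hsub m hm),
      sub_add_cancel]
  · rw [hcu m]
    exact (isNortheast_add_right_iff ..).2 (hx.isNortheast _ (hsub m hm))
  · rw [hcu, add_sub_cancel_right, add_sub_right_comm, add_sub_cancel_right]
    simpa using hx.first
  · rw [hcu, add_sub_cancel_right, add_right_comm, add_sub_cancel_right]
    simpa using hx.last

lemma exists_lt (hW : IsPartialPerm n W) (hC : IsPeriodic n C) (hd : IsChannelNumbering n W C d)
    (hr : 0 < streamDensity n C) (hc : Enumerates n (streamDensity n C) C d c)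
    (hx : IsDetour W d c x a z) :
    ∃ (y : ℤ → ℤ × ℤ) (a' : ℤ), IsDetour W d c y a' z ∧ z < a' + streamDensity n C := by
  set r := streamDensity n C
  have hr' : (0 : ℤ) < r := Int.natCast_pos.2 hr
  set t := (z - a) / r
  have ht : 0 ≤ t * r :=
    mul_nonneg (Int.ediv_nonneg (sub_nonneg.2 hx.le) hr'.le) hr'.le
  have hdiv := Int.emod_add_ediv_mul (z - a) r
  have hnonneg := Int.emod_nonneg (z - a) hr'.ne'
  have hlt := Int.emod_lt_of_pos (z - a) hr'
  exact ⟨_, a + t * r, hx.meet hW hd (hx.shift hW.isPeriodic hC hd hc t) (by linarith) (by linarith)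
    (by linarith), by linarith⟩

lemma mem_partialRotation (hC : IsStream n C) (hc : Enumerates n r C d c)
    (hx : IsDetour W d c x a z) {m : ℤ} (hm : m ∈ Icc a z) : x m ∈ partialRotation W C := by
  have hne := hx.isNortheast m hm
  exact Or.inl ⟨hx.isChainOn.mem m hm, fun hmC =>
    (hC.isNorthwest hmC (hc.mem m) hne.1).2.not_gt hne.2⟩

lemma exists_isChainOn_partialRotation (hC : IsStream n C) (hc : Enumerates n r C d c)
    (hx : IsDetour W d c x a z) (k : ℤ) :
    ∃ y, IsChainOn (partialRotation W C) y (a - 1) k ∧ y (a - 1) = rotatedBall c (a - 1) ∧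
      ∀ m, z < m → y m = rotatedBall c (m - 1) := by
  have hle := hx.le
  set y : ℤ → ℤ × ℤ := fun m =>
    if m < a then rotatedBall c m else if m ≤ z then x m else rotatedBall c (m - 1) with hy
  have hy_before : y (a - 1) = rotatedBall c (a - 1) := if_pos (by omega)
  have hy_detour : ∀ m ∈ Icc a z, y m = x m := fun m hm => by
    simp only [hy, if_neg hm.1.not_gt, if_pos hm.2]
  have hy_after : ∀ m, z < m → y m = rotatedBall c (m - 1) := fun m hm => by
    simp only [hy, if_neg (hle.trans hm.le).not_gt, if_neg hm.not_ge]
  refine ⟨y, ⟨fun m _ => ?_, fun m hm => ?_⟩, hy_before, hy_after⟩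
  · simp only [hy]
    split_ifs with hma hmz
    · exact hc.rotatedBall_mem m
    · exact hx.mem_partialRotation hC hc ⟨not_lt.1 hma, hmz⟩
    · exact hc.rotatedBall_mem (m - 1)
  · rcases hm.1.eq_or_lt with rfl | ham
    · rw [hy_before, sub_add_cancel, hy_detour a ⟨le_rfl, hle⟩]
      exact ⟨hx.first, by simpa [rotatedBall] using (hx.isNortheast a ⟨le_rfl, hle⟩).2⟩
    replace ham : a ≤ m := by omega
    rcases lt_trichotomy m z with hmz | rfl | hmz
    · rw [hy_detour m ⟨ham, hmz.le⟩, hy_detour (m + 1) ⟨by omega, hmz⟩]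
      exact hx.isChainOn.isNorthwest m ⟨ham, hmz⟩
    · rw [hy_detour m ⟨ham, le_rfl⟩, hy_after (m + 1) (lt_add_one m), add_sub_cancel_right]
      exact ⟨(hx.isNortheast m ⟨ham, le_rfl⟩).1, hx.last⟩
    · rw [hy_after m hmz, hy_after (m + 1) (by omega)]
      exact hc.rotatedBall_isNorthwest (by omega)

lemma exists_stream (hW : IsPeriodic n W) (hC : IsStream n C) (hc : Enumerates n r C d c)
    (hx : IsDetour W d c x a z) (hzr : z < a + r) :
    ∃ S : Set (ℤ × ℤ), IsStream n S ∧ S ⊆ partialRotation W C ∧ streamDensity n S = r + 1 := by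
  obtain ⟨y, hy, hfirst, hafter⟩ :=
    hx.exists_isChainOn_partialRotation hC hc (a - 1 + (r + 1 : ℕ))
  refine hy.exists_stream (isPeriodic_partialRotation hW hC.isPeriodic) r.succ_pos ?_
  rw [hfirst, hafter _ (by push_cast; omega), ← hc.rotatedBall_add_period]
  congr 1
  push_cast
  ring

end IsDetour

lemma IsChainOn.exists_isDetour {n r : ℕ} {W C : Set (ℤ × ℤ)} {d : ℤ × ℤ → ℤ}
    {c x : ℤ → ℤ × ℤ} {s i k : ℤ} (hW : IsPartialPerm n W) (hCW : C ⊆ W)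
    (hd : IsChannelNumbering n W C d) (hc : Enumerates n r C d c) (hx : IsChainOn W x s k)
    (hi : i ∈ Icc s k) (hs : x s = c s) (hk : x k = c k) (hxi : IsNortheast (x i) (c i)) :
    ∃ a z, IsDetour W d c x a z := by
  have hdx : ∀ m ∈ Icc s k, d (x m) = m := fun m =>
    hd.apply_eq_of_isChainOn hx (by rw [hs, hc.apply_eq]) (by rw [hk, hc.apply_eq])
  have hcompare : ∀ m ∈ Icc s k, x m = c m ∨ IsNortheast (x m) (c m) ∨ IsNortheast (c m) (x m) :=
    fun m hm => hd.eq_or_isNortheast hW (hx.mem m hm) (hCW (hc.mem m))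
      ((hdx m hm).trans (hc.apply_eq m).symm)
  have hsw : ∀ m ∈ Icc s k, ¬ IsNortheast (x m) (c m) →
      (c m).1 ≤ (x m).1 ∧ (x m).2 ≤ (c m).2 := fun m hm hne => by
    rcases hcompare m hm with h | h | h
    · simp [h]
    · exact absurd h hne
    · exact ⟨h.1.le, h.2.le⟩
  obtain ⟨j, ⟨⟨hsj, hji⟩, hj⟩, hmax⟩ := Int.exists_greatest_of_bdd
    (P := fun j => j ∈ Icc s i ∧ ¬ IsNortheast (x j) (c j)) ⟨i, fun _ h => h.1.2⟩
    ⟨s, ⟨le_rfl, hi.1⟩, by simp [hs]⟩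
  obtain ⟨l, ⟨⟨hil, hlk⟩, hl⟩, hmin⟩ := Int.exists_least_of_bdd
    (P := fun l => l ∈ Icc i k ∧ ¬ IsNortheast (x l) (c l)) ⟨i, fun _ h => h.1.1⟩
    ⟨k, ⟨hi.2, le_rfl⟩, by simp [hk]⟩
  have hji' : j < i := lt_of_le_of_ne hji fun h => hj (h ▸ hxi)
  have hil' : i < l := lt_of_le_of_ne hil fun h => hl (h ▸ hxi)
  refine ⟨j + 1, l - 1, by omega, hx.mono (by omega) (by omega),
    fun m hm => hdx m ⟨by linarith [hm.1], by linarith [hm.2]⟩, fun m hm => ?_, ?_, ?_⟩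
  · obtain ⟨hjm, hml⟩ := hm
    by_contra hne
    rcases le_total m i with hmi | him
    · have := hmax m ⟨⟨by omega, hmi⟩, hne⟩
      omega
    · have := hmin m ⟨⟨him, by omega⟩, hne⟩
      omega
  · rw [add_sub_cancel_right]
    exact (hsw j ⟨hsj, by omega⟩ hj).1.trans_lt (hx.isNorthwest j ⟨hsj, by omega⟩).1
  · have hstep := (hx.isNorthwest (l - 1) ⟨by omega, by omega⟩).2
    rw [sub_add_cancel] at hstep ⊢
    exact hstep.trans_le (hsw l ⟨by omega, hlk⟩ hl).2

lemma exists_stream_partialRotation {n : ℕ} {W C C' : Set (ℤ × ℤ)} {d d' : ℤ × ℤ → ℤ}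
    (hW : IsPartialPerm n W) (hC : IsStream n C) (hC' : IsStream n C') (hCW : C ⊆ W)
    (hCW' : C' ⊆ W) (hdens : streamDensity n C' = streamDensity n C)
    (hr : 0 < streamDensity n C) (hne : C' ≠ C) (hsw : SWle C C')
    (hd : IsChannelNumbering n W C d) (hd' : IsChannelNumbering n W C' d')
    (hagree : ∃ b ∈ C, d' b = d b) (hdist0 : ∀ b ∈ C', d' b = d b) :
    ∃ S : Set (ℤ × ℤ), IsStream n S ∧ S ⊆ partialRotation W C ∧
      streamDensity n S = streamDensity n C + 1 := by
  obtain ⟨c, hc⟩ := hd.exists_enumerates hC hr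
  obtain ⟨c', hc'⟩ := hd'.exists_enumerates hC' (hdens ▸ hr)
  rw [hdens] at hc'
  have hdc' : ∀ m, d (c' m) = m := fun m => by rw [← hdist0 _ (hc'.mem m), hc'.apply_eq]
  obtain ⟨i, hi⟩ : ∃ i, c' i ≠ c i :=
    Function.ne_iff.1 fun h => hne (by rw [← hc'.range_eq, h, hc.range_eq])
  have hnorth := hc.isNortheast_of_SWle hW hCW hCW' hd hc' hsw (hdc' i) hi
  obtain ⟨s, k, x, hik, hx, hxs, hxi, hxk⟩ :=
    exists_isChainOn_through hW.isPeriodic hCW hCW' hd hd' hr hc hc' (hdc' i)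
      (hd'.apply_enumerates_eq hW.isPeriodic hC'.isPeriodic hCW hr hdens hc hagree i)
  obtain ⟨a, z, hdetour⟩ := hx.exists_isDetour hW hCW hd hc hik hxs hxk (hxi ▸ hnorth)
  obtain ⟨y, a', hshort, hlt⟩ := hdetour.exists_lt hW hC.isPeriodic hd hr hc
  exact hshort.exists_stream hW.isPeriodic hC hc hlt

/-- If `C` is a channel of `W` that is not the northeast channel of its river
(witnessed by a different channel `C'` northeast of `C` at distance `0`, i.e.
whose normalized channel numberings agree on `C'`), then the partial rotation
`pr_C W` contains a stream of density strictly greater than that of `C`.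
Consequently the maximal stream density (the first part of the Greene–Kleitman
partition) strictly increases, so `pr_C W` is not in the same two-sided cell
as `W`. -/
theorem stmt19 (n : ℕ) (hn : 0 < n) (W C C' : Set (ℤ × ℤ))
    (hW : IsPartialPerm n W)
    (hC : IsChannel n W C) (hC' : IsChannel n W C')
    (hne : C' ≠ C) (hsw : SWle C C')
    (d d' : ℤ × ℤ → ℤ)
    (hd : IsChannelNumbering n W C d) (hd' : IsChannelNumbering n W C' d')
    (hagree : ∃ b ∈ C, d' b = d b)
    (hdist0 : ∀ b ∈ C', d' b = d b) :
    (∃ S : Set (ℤ × ℤ), IsStream n S ∧ S ⊆ partialRotation W C ∧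
      streamDensity n C < streamDensity n S) ∧
    (∀ r r' : ℕ,
      IsGreatest {k : ℕ | ∃ S : Set (ℤ × ℤ),
        IsStream n S ∧ S ⊆ W ∧ streamDensity n S = k} r →
      IsGreatest {k : ℕ | ∃ S : Set (ℤ × ℤ),
        IsStream n S ∧ S ⊆ partialRotation W C ∧ streamDensity n S = k} r' →
      r < r') := by
  have hdens : streamDensity n C' = streamDensity n C :=
    le_antisymm (hC.2.2 C' hC'.1 hC'.2.1) (hC'.2.2 C hC.1 hC.2.1)
  obtain ⟨b, hb, hdb⟩ := hagree
  obtain ⟨S, hS, hSW, hcard⟩ := exists_stream_partialRotation hW hC.1 hC'.1 hC.2.1 hC'.2.1 hdens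
    (hC.1.streamDensity_pos hn hb) hne hsw hd hd' ⟨b, hb, hdb⟩ hdist0
  have hlt : streamDensity n C < streamDensity n S := by omega
  refine ⟨⟨S, hS, hSW, hlt⟩, ?_⟩
  rintro r r' ⟨⟨T, hT, hTW, rfl⟩, -⟩ ⟨-, hub⟩
  calc streamDensity n T ≤ streamDensity n C := hC.2.2 T hT hTW
    _ < streamDensity n S := hlt
    _ ≤ r' := hub ⟨S, hS, hSW, rfl⟩
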